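/- Let λ, μ, ν be partitions of the same positive integer N with at most 8, 2, 4 parts respectively (padded with zeros), and let b ∈ ℤ⁴ be the vector b = (ν_2 + ν_3 + ν_4 − λ_3 − λ_4 − λ_5 − λ_6 − λ_7 − λ_8, μ_2 + ν_2 + ν_3 + ν_4 − λ_2 − λ_3 − λ_4 − λ_5 − 2λ_6 − 2λ_7 − 2λ_8, μ_2 + ν_2 + 2ν_3 + 2ν_4 − λ_2 − λ_3 − 2λ_4 − 2λ_5 − 2λ_6 − 3λ_7 − 3λ_8, μ_2 + ν_2 + ν_3 + 2ν_4 − λ_2 − λ_3 − λ_4 − 2λ_5 − 2λ_6 − 2λ_7 − 3λ_8). Then the number of vectors x ∈ ℕ^{21} with A^{2,4} x = b (i.e., the atomic Kronecker coefficient g̃^{2,4}_{λ,μ,ν}) is at most C(N + 8, 8) · C(2N + 8, 8) · (3N + 1), where C(·,·) denotes a binomial coefficient. -/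

import Mathlib

/-- The matrix `A^{2,4}` (over `ℤ`). -/
def A24 : Matrix (Fin 4) (Fin 21) ℤ :=
  !![0, 0, 0, 1, 0, 0, 0, 1, 1, 0, 0, 0, 0, 0, 1, 0, 1, 1, 1, 1, 1;
     0, 0, 1, 0, 0, 1, 1, 0, 0, 1, 1, 1, 1, 1, 1, 1, 1, 1, 2, 2, 2;
     0, 1, 0, 0, 1, 0, 1, 1, 1, 1, 1, 1, 1, 2, 1, 2, 2, 2, 2, 3, 3;
     1, 0, 0, 0, 1, 1, 0, 0, 1, 1, 1, 1, 2, 1, 1, 2, 1, 2, 2, 2, 3]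

/-!
Suppose some columns of a nonnegative integer matrix `A` form an identity matrix, and assign to
every other column, called free, a row (its pivot) in which its entry is positive. A solution
`x` of `A x = b` in natural numbers is determined by its free coordinates, and row `i` of the
system bounds the sum of the `kᵢ` free coordinates with pivot `i` by `bᵢ`. By stars and bars there
are at most `∏ᵢ C(bᵢ + kᵢ, kᵢ)` solutions. For `A^{2,4}`, taking the pivot of a column to be its
first nonzero row gives `k = (8, 8, 1, 0)`.
-/

open Matrix

section StarsAndBars

variable {κ : Type*} [Fintype κ]

/-- Adding the slack `n - ∑ j, z j` as an extra coordinate turns vectors of natural numbers with sum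
at most `n` into vectors with sum exactly `n`, which are counted by stars and bars. -/
def sumLeEquivSumEqOption (n : ℕ) :
    {z : κ → ℕ // ∑ j, z j ≤ n} ≃ {w : Option κ → ℕ // ∑ o, w o = n} where
  toFun z := ⟨fun o => o.elim (n - ∑ j, z.1 j) z.1, by
    simpa [Fintype.sum_option] using Nat.sub_add_cancel z.2⟩
  invFun w := ⟨fun j => w.1 (some j),
    (Nat.le_add_left _ (w.1 none)).trans_eq ((Fintype.sum_option w.1).symm.trans w.2)⟩
  left_inv _ := rfl
  right_inv w := by
    have hw : w.1 none + ∑ j, w.1 (some j) = n := (Fintype.sum_option w.1).symm.trans w.2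
    ext (_ | j)
    · exact (Nat.eq_sub_of_add_eq hw).symm
    · rfl

/-- The multiplicities of a multiset of size `n` in `Option κ`, with that of `none` forgotten, form
a vector with sum at most `n`, and every such vector arises exactly once. -/
noncomputable def sumLeEquivSym [DecidableEq κ] (n : ℕ) :
    {z : κ → ℕ // ∑ j, z j ≤ n} ≃ Sym (Option κ) n :=
  (sumLeEquivSumEqOption n).trans (Sym.equivNatSumOfFintype (Option κ) n).symm

instance finite_sum_le (n : ℕ) : Finite {z : κ → ℕ // ∑ j, z j ≤ n} := by
  classical exact Finite.of_equiv _ (sumLeEquivSym n).symm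

theorem natCard_sum_le (n : ℕ) :
    Nat.card {z : κ → ℕ // ∑ j, z j ≤ n} = (n + Fintype.card κ).choose (Fintype.card κ) := by
  classical
  calc Nat.card {z : κ → ℕ // ∑ j, z j ≤ n}
      = Fintype.card (Sym (Option κ) n) := by
        rw [Nat.card_congr (sumLeEquivSym n), Nat.card_eq_fintype_card]
    _ = (n + Fintype.card κ).choose n := by
        rw [Sym.card_sym_eq_choose, Fintype.card_option, Nat.add_right_comm, Nat.add_sub_cancel,
          add_comm]
    _ = (n + Fintype.card κ).choose (Fintype.card κ) := Nat.choose_symm_add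

end StarsAndBars

section UnitColumns

variable {ι κ R : Type*} [DecidableEq ι] {A : Matrix ι κ R} {e : ι → κ}

theorem injective_of_submatrix_eq_one [Zero R] [One R] [NeZero (1 : R)]
    (he : A.submatrix id e = 1) : Function.Injective e := by
  intro i i' h
  by_contra hne
  have hdiag : A i (e i) = 1 := (congrFun₂ he i i).trans (one_apply_eq i)
  have hoff : A i (e i') = 0 := (congrFun₂ he i i').trans (one_apply_ne hne)
  exact one_ne_zero (hdiag.symm.trans (h ▸ hoff))

theorem mulVec_eq_comp_of_submatrix_eq_one [Fintype κ] [NonAssocSemiring R]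
    (he : A.submatrix id e = 1) {d : κ → R} (hd : ∀ j ∉ Set.range e, d j = 0) :
    A *ᵥ d = d ∘ e := by
  nontriviality R
  have inj : Function.Injective e := injective_of_submatrix_eq_one he
  have : Fintype ι := Fintype.ofInjective e inj
  calc A *ᵥ d = A.submatrix id e *ᵥ (d ∘ e) := by
        ext i
        exact (Fintype.sum_of_injective e inj _ _ (fun j hj => by rw [hd j hj, mul_zero])
          (fun _ => rfl)).symm
    _ = d ∘ e := by rw [he, one_mulVec]

theorem eq_of_mulVec_eq_of_eq_off_range [Fintype κ] [NonAssocRing R]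
    (he : A.submatrix id e = 1) {x y : κ → R} (hxy : A *ᵥ x = A *ᵥ y)
    (hfree : ∀ j ∉ Set.range e, x j = y j) : x = y := by
  have hcomp : A *ᵥ (x - y) = (x - y) ∘ e :=
    mulVec_eq_comp_of_submatrix_eq_one he fun j hj => sub_eq_zero.2 (hfree j hj)
  rw [mulVec_sub, hxy, sub_self] at hcomp
  ext j
  by_cases hj : j ∈ Set.range e
  · obtain ⟨i, rfl⟩ := hj
    exact sub_eq_zero.1 (congrFun hcomp i).symm
  · exact hfree j hj

end UnitColumns

theorem sum_le_mulVec_apply {ι κ R : Type*} [Fintype κ] [Semiring R] [PartialOrder R]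
    [IsOrderedRing R] {A : Matrix ι κ R} {i : ι} {s : Finset κ} {x : κ → R}
    (hA : ∀ j, 0 ≤ A i j) (hs : ∀ j ∈ s, 1 ≤ A i j) (hx : 0 ≤ x) :
    ∑ j ∈ s, x j ≤ (A *ᵥ x) i :=
  calc ∑ j ∈ s, x j ≤ ∑ j ∈ s, A i j * x j :=
        Finset.sum_le_sum fun j hj => le_mul_of_one_le_left (hx j) (hs j hj)
    _ ≤ ∑ j, A i j * x j :=
        Finset.sum_le_sum_of_subset_of_nonneg (Finset.subset_univ s)
          fun j _ _ => mul_nonneg (hA j) (hx j)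

/-- The vector partition function of `A` at `b`: the number of ways to write `b` as a combination
of the columns of `A` with natural number coefficients. It is `0` by convention if there are
infinitely many. -/
noncomputable def vectorPartitionFunction {ι κ : Type*} [Fintype κ] (A : Matrix ι κ ℤ)
    (b : ι → ℤ) : ℕ :=
  Nat.card {x : κ → ℕ // A *ᵥ (fun j => (x j : ℤ)) = b}

section PivotBound

variable {ι κ : Type*} [Fintype ι] [DecidableEq ι] [Fintype κ] [DecidableEq κ]

/-- The columns assigned to row `i` by the pivot map `p`, apart from the unit columns, which are
listed by `e`. -/
def freeColumns (e : ι → κ) (p : κ → ι) (i : ι) : Finset κ :=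
  {j | (∀ i', e i' ≠ j) ∧ p j = i}

theorem vectorPartitionFunction_le_prod_choose {A : Matrix ι κ ℤ} {e : ι → κ} {p : κ → ι}
    (hA : ∀ i j, 0 ≤ A i j) (he : A.submatrix id e = 1)
    (hp : ∀ i, ∀ j ∈ freeColumns e p i, 1 ≤ A i j) (b : ι → ℤ) :
    vectorPartitionFunction A b ≤
      ∏ i, ((b i).toNat + (freeColumns e p i).card).choose (freeColumns e p i).card := by
  have hsum : ∀ (x : κ → ℕ), A *ᵥ (fun j => (x j : ℤ)) = b → ∀ i,
      ∑ j : freeColumns e p i, x j ≤ (b i).toNat := by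
    rintro x rfl i
    have hrow := sum_le_mulVec_apply (hA i) (hp i) (fun j => Int.natCast_nonneg (x j))
    rw [Finset.sum_coe_sort]
    zify
    exact hrow.trans (Int.self_le_toNat _)
  let restrict : {x : κ → ℕ // A *ᵥ (fun j => (x j : ℤ)) = b} →
      ∀ i, {z : freeColumns e p i → ℕ // ∑ j, z j ≤ (b i).toNat} :=
    fun x i => ⟨fun j => x.1 j, hsum x.1 x.2 i⟩
  have restrict_injective : Function.Injective restrict := by
    rintro ⟨x, hx⟩ ⟨y, hy⟩ hxy
    have hfree : ∀ j ∉ Set.range e, (x j : ℤ) = y j := fun j hj => by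
      have hj' : j ∈ freeColumns e p (p j) := by simpa [freeColumns] using hj
      exact congrArg Nat.cast (congrFun (congrArg Subtype.val (congrFun hxy (p j))) ⟨j, hj'⟩)
    have hcast := eq_of_mulVec_eq_of_eq_off_range he (hx.trans hy.symm) hfree
    exact Subtype.ext (funext fun j => Int.ofNat_inj.1 (congrFun hcast j))
  calc vectorPartitionFunction A b
      ≤ Nat.card (∀ i, {z : freeColumns e p i → ℕ // ∑ j, z j ≤ (b i).toNat}) :=
        Nat.card_le_card_of_injective restrict restrict_injective
    _ = ∏ i, ((b i).toNat + (freeColumns e p i).card).choose (freeColumns e p i).card := by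
        simp only [Nat.card_pi, natCard_sum_le, Fintype.card_coe]

end PivotBound

/-- `unitColumn24 i` is the column of `A^{2,4}` equal to the `i`-th standard basis vector. -/
def unitColumn24 : Fin 4 → Fin 21 := ![3, 2, 1, 0]

/-- The row of the first nonzero entry of each column of `A^{2,4}`. -/
def pivot24 : Fin 21 → Fin 4 :=
  ![3, 2, 1, 0, 2, 1, 1, 0, 0, 1, 1, 1, 1, 1, 0, 1, 0, 0, 0, 0, 0]

theorem A24_nonneg : ∀ i j, 0 ≤ A24 i j := by
  intro i
  fin_cases i <;> decide

theorem A24_submatrix_unitColumn24 : A24.submatrix id unitColumn24 = 1 := by decide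

theorem one_le_A24_of_mem_freeColumns :
    ∀ i, ∀ j ∈ freeColumns unitColumn24 pivot24 i, 1 ≤ A24 i j := by
  intro i
  fin_cases i <;> decide

theorem card_freeColumns_A24 :
    ∀ i, (freeColumns unitColumn24 pivot24 i).card = ![8, 8, 1, 0] i := by decide

theorem vectorPartitionFunction_A24_le (b : Fin 4 → ℤ) :
    vectorPartitionFunction A24 b ≤
      ((b 0).toNat + 8).choose 8 * ((b 1).toNat + 8).choose 8 * ((b 2).toNat + 1) := by
  have hle := vectorPartitionFunction_le_prod_choose A24_nonneg A24_submatrix_unitColumn24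
    one_le_A24_of_mem_freeColumns b
  simpa [Fin.prod_univ_four, card_freeColumns_A24] using hle

theorem atomic_24_size_bound_general {b : Fin 4 → ℤ} {B₀ B₁ B₂ : ℕ}
    (h₀ : b 0 ≤ B₀) (h₁ : b 1 ≤ B₁) (h₂ : b 2 ≤ B₂) :
    Nat.card {x : Fin 21 → ℕ // A24.mulVec (fun j => (x j : ℤ)) = b} ≤
      Nat.choose (B₀ + 8) 8 * Nat.choose (B₁ + 8) 8 * (B₂ + 1) := by
  refine (vectorPartitionFunction_A24_le b).trans ?_
  gcongr <;> omega

/-- Corollary 6.7 for `m = 2, n = 4`: for partitions `λ, μ, ν` of `N` with at most `8, 2, 4`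
parts, the atomic Kronecker coefficient `g̃^{2,4}_{λ,μ,ν} = p_{A^{2,4}}(b(λ,μ,ν))` is at most
`C(N+8, 8) · C(2N+8, 8) · (3N+1)`. -/
theorem atomic_24_size_bound (N : ℕ) (hN : 0 < N)
    (l1 l2 l3 l4 l5 l6 l7 l8 m1 m2 n1 n2 n3 n4 : ℕ)
    (hl12 : l2 ≤ l1) (hl23 : l3 ≤ l2) (hl34 : l4 ≤ l3) (hl45 : l5 ≤ l4)
    (hl56 : l6 ≤ l5) (hl67 : l7 ≤ l6) (hl78 : l8 ≤ l7)
    (hm12 : m2 ≤ m1) (hn12 : n2 ≤ n1) (hn23 : n3 ≤ n2) (hn34 : n4 ≤ n3)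
    (hlN : l1 + l2 + l3 + l4 + l5 + l6 + l7 + l8 = N)
    (hmN : m1 + m2 = N)
    (hnN : n1 + n2 + n3 + n4 = N) :
    Nat.card {x : Fin 21 → ℕ //
      A24.mulVec (fun j => (x j : ℤ)) =
        ![(n2 : ℤ) + n3 + n4 - l3 - l4 - l5 - l6 - l7 - l8,
          (m2 : ℤ) + n2 + n3 + n4 - l2 - l3 - l4 - l5 - 2 * l6 - 2 * l7 - 2 * l8,
          (m2 : ℤ) + n2 + 2 * n3 + 2 * n4 - l2 - l3 - 2 * l4 - 2 * l5 - 2 * l6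
            - 3 * l7 - 3 * l8,
          (m2 : ℤ) + n2 + n3 + 2 * n4 - l2 - l3 - l4 - 2 * l5 - 2 * l6 - 2 * l7
            - 3 * l8]} ≤
      Nat.choose (N + 8) 8 * Nat.choose (2 * N + 8) 8 * (3 * N + 1) := by
  apply atomic_24_size_bound_general <;> simp only [cons_val] <;> omega
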